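/- arXiv:2212.05754 — 2 statements merged into one kernel-verified Lean document; each statement's English description precedes it below -/
import Mathlib

section
/- If χ : M → ℂ is an additive homomorphism of non-trivial-ends type which is not real-collinear, then there exists a system of handle generators α₁, β₁, …, α_g, β_g in M such that Im(conj(χ(αᵢ)) · χ(βᵢ)) > 0 for every i = 1, …, g (every handle has positive volume). -/
open scoped BigOperators

/-- The standard symplectic (intersection) form on `ℤ^{2g}`. -/
def symplecticForm (g : ℕ) (x y : Fin (2 * g) → ℤ) : ℤ :=
  ∑ i : Fin g,
    (x ⟨2 * i.1, by have := i.isLt; omega⟩ * y ⟨2 * i.1 + 1, by have := i.isLt; omega⟩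
      - x ⟨2 * i.1 + 1, by have := i.isLt; omega⟩ * y ⟨2 * i.1, by have := i.isLt; omega⟩)

/-- `H₁(S_{g,n}; ℤ)` modelled as `ℤ^{2g} ⊕ ℤ^{n-1}`, the second factor being the
peripheral subgroup. -/
abbrev HomologyPunctured (g n : ℕ) := (Fin (2 * g) → ℤ) × (Fin (n - 1) → ℤ)

/-- `α₁, β₁, …, α_g, β_g` is a system of handle generators of `ℤ^{2g} ⊕ ℤ^{n-1}`, with
respect to the intersection form given by the standard symplectic form on `ℤ^{2g}`
extended by zero on the peripheral factor. -/
def IsHandleSystem (g n : ℕ) (α β : Fin g → HomologyPunctured g n) : Prop :=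
  ∀ i j : Fin g,
    symplecticForm g (α i).1 (α j).1 = 0 ∧ symplecticForm g (β i).1 (β j).1 = 0 ∧
      symplecticForm g (α i).1 (β j).1 = (if i = j then 1 else 0)

/-- `χ` is real-collinear: its image is contained in `ℝ·c` for some `c ∈ ℂ`. -/
def RealCollinear {M : Type*} [AddCommGroup M] (χ : M →+ ℂ) : Prop :=
  ∃ c : ℂ, ∀ x : M, ∃ r : ℝ, χ x = (r : ℂ) * c

/-- The intersection form as a bilinear map. -/
def sympB (g n : ℕ) : HomologyPunctured g n →ₗ[ℤ] HomologyPunctured g n →ₗ[ℤ] ℤ :=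
  LinearMap.mk₂ ℤ (fun x y => symplecticForm g x.1 y.1)
    (by intro x x' y
        simp only [symplecticForm, ← Finset.sum_add_distrib]
        refine Finset.sum_congr rfl fun i _ => ?_
        simp only [Prod.fst_add, Pi.add_apply]; ring)
    (by intro c x y
        simp only [symplecticForm, Finset.smul_sum]
        refine Finset.sum_congr rfl fun i _ => ?_
        simp only [Prod.smul_fst, Pi.smul_apply, smul_eq_mul]; ring)
    (by intro x y y'
        simp only [symplecticForm, ← Finset.sum_add_distrib]
        refine Finset.sum_congr rfl fun i _ => ?_
        simp only [Prod.fst_add, Pi.add_apply]; ring)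
    (by intro c x y
        simp only [symplecticForm, Finset.smul_sum]
        refine Finset.sum_congr rfl fun i _ => ?_
        simp only [Prod.smul_fst, Pi.smul_apply, smul_eq_mul]; ring)

lemma sympB_apply (g n : ℕ) (x y : HomologyPunctured g n) :
    sympB g n x y = symplecticForm g x.1 y.1 := rfl

lemma sympB_swap (g n : ℕ) (x y : HomologyPunctured g n) :
    sympB g n x y = - sympB g n y x := by
  simp only [sympB_apply, symplecticForm, ← Finset.sum_neg_distrib]
  refine Finset.sum_congr rfl fun i _ => ?_
  ring

lemma isHandle_iff (g n : ℕ) (α β : Fin g → HomologyPunctured g n) :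
    IsHandleSystem g n α β ↔ ∀ i j, sympB g n (α i) (α j) = 0 ∧ sympB g n (β i) (β j) = 0 ∧
      sympB g n (α i) (β j) = (if i = j then 1 else 0) := Iff.rfl

/-- Standard handles. -/
def stdA (g n : ℕ) (i : Fin g) : HomologyPunctured g n :=
  (Pi.single ⟨2 * i.1, by have := i.isLt; omega⟩ 1, 0)

/-- Standard handles. -/
def stdB (g n : ℕ) (i : Fin g) : HomologyPunctured g n :=
  (Pi.single ⟨2 * i.1 + 1, by have := i.isLt; omega⟩ 1, 0)

lemma std_handle (g n : ℕ) : IsHandleSystem g n (stdA g n) (stdB g n) := by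
  intro i j
  have h1 : ∀ a b : ℕ, 2 * a + 1 ≠ 2 * b := by intros; omega
  have h2 : ∀ a b : ℕ, 2 * a ≠ 2 * b + 1 := by intros; omega
  refine ⟨?_, ?_, ?_⟩
  · simp [symplecticForm, stdA, Pi.single_apply, Fin.ext_iff, h1, h2]
  · simp [symplecticForm, stdB, Pi.single_apply, Fin.ext_iff, h1, h2]
  · simp only [symplecticForm, stdA, stdB, Pi.single_apply, Fin.ext_iff, h1, h2]
    rw [Finset.sum_eq_single i]
    · simp
    · intro b _ hb
      have : b.1 ≠ i.1 := fun h => hb (Fin.ext h)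
      simp [this]
    · simp

lemma swap_handle {g n : ℕ} {α β : Fin g → HomologyPunctured g n}
    (h : IsHandleSystem g n α β) : IsHandleSystem g n β (fun i => - α i) := by
  rw [isHandle_iff] at *
  intro i j
  refine ⟨(h i j).2.1, ?_, ?_⟩
  · simp [(h i j).1]
  · rw [map_neg, ← sympB_swap, (h j i).2.2]
    simp [eq_comm]

/-- Adding peripheral elements. -/
lemma add_periph {g n : ℕ} {α β : Fin g → HomologyPunctured g n}
    (h : IsHandleSystem g n α β) (p q : Fin g → Fin (n - 1) → ℤ) :
    IsHandleSystem g n (fun i => α i + (0, p i)) (fun i => β i + (0, q i)) := by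
  intro i j
  simpa using h i j

lemma spread {g n : ℕ} {α β : Fin g → HomologyPunctured g n}
    (h : IsHandleSystem g n α β) (l : HomologyPunctured g n →+ ℝ) (i₀ : Fin g)
    (h0 : l (α i₀) ≠ 0) :
    ∃ α' β', IsHandleSystem g n α' β' ∧ ∀ i, l (α' i) ≠ 0 := by
  classical
  let c : Fin g → ℤ := fun j => if l (α j) = 0 then 1 else 0
  have hc0 : c i₀ = 0 := by simp [c, h0]
  refine ⟨fun j => α j + c j • α i₀,
    fun j => β j - (if j = i₀ then (1 : ℤ) else 0) • ∑ k, c k • β k, ?_, ?_⟩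
  · rw [isHandle_iff] at *
    have haa := fun i j => (h i j).1
    have hbb := fun i j => (h i j).2.1
    have hab := fun i j => (h i j).2.2
    intro i j
    refine ⟨?_, ?_, ?_⟩
    · simp only [map_add, map_smul, LinearMap.add_apply, LinearMap.smul_apply, haa, smul_zero,
        add_zero]
    · simp only [map_sub, map_smul, map_sum, LinearMap.sub_apply, LinearMap.smul_apply,
        LinearMap.sum_apply, hbb, smul_zero, Finset.sum_const_zero, sub_zero]
    · simp only [map_add, map_sub, map_smul, map_sum, LinearMap.add_apply, LinearMap.smul_apply,
        hab, smul_eq_mul, mul_ite, mul_one, mul_zero, Finset.sum_ite_eq, Finset.mem_univ, if_true,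
        hc0]
      by_cases hj : j = i₀
      · subst hj; simp [mul_add, Finset.sum_add_distrib, hc0]
      · simp [hj, Ne.symm hj]
  · intro j
    by_cases hj : l (α j) = 0
    · simp [c, hj, h0]
    · simp [c, hj]

lemma exists_nonvanishing {g n : ℕ} (hg : 1 ≤ g) (l : HomologyPunctured g n →+ ℝ) (hl : l ≠ 0) :
    ∃ α β, IsHandleSystem g n α β ∧ ∀ i, l (α i) ≠ 0 := by
  classical
  by_cases hp : ∃ v : Fin (n - 1) → ℤ, l (0, v) ≠ 0
  · obtain ⟨v, hv⟩ := hp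
    refine ⟨_, _, add_periph (std_handle g n)
      (fun i => if l (stdA g n i) = 0 then v else 0) (fun _ => 0), ?_⟩
    intro i
    by_cases hi : l (stdA g n i) = 0
    · simp [hi, hv]
    · have : ((0 : Fin (2 * g) → ℤ), (0 : Fin (n - 1) → ℤ)) = 0 := rfl
      simp [hi, this]
  push Not at hp
  by_cases ha : ∃ i, l (stdA g n i) ≠ 0
  · obtain ⟨i, hi⟩ := ha
    exact spread (std_handle g n) l i hi
  by_cases hb : ∃ i, l (stdB g n i) ≠ 0
  · obtain ⟨i, hi⟩ := hb
    exact spread (swap_handle (std_handle g n)) l i hi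
  push Not at ha hb
  exfalso
  apply hl
  have h1 : l.comp (AddMonoidHom.inl _ _) = 0 := by
    apply AddMonoidHom.functions_ext
    intro k z
    have hz : (Pi.single k z : Fin (2 * g) → ℤ) = z • Pi.single k 1 := by
      rw [← Pi.single_smul]; simp
    have hk : l ((Pi.single k 1 : Fin (2 * g) → ℤ), 0) = 0 := by
      rcases Nat.even_or_odd' k.1 with ⟨m, hm | hm⟩
      · have := ha ⟨m, by have := k.isLt; omega⟩
        simp only [stdA, ← hm] at this
        exact this
      · have := hb ⟨m, by have := k.isLt; omega⟩
        simp only [stdB, ← hm] at this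
        exact this
    rw [hz, map_zsmul]
    simp [hk]
  ext x
  obtain ⟨x, v⟩ := x
  have : ((x, v) : HomologyPunctured g n) = (x, 0) + (0, v) := by simp
  rw [this, map_add, hp]
  have := DFunLike.congr_fun h1 x
  simpa using this

/-- If `χ : M → ℂ` is an additive homomorphism of non-trivial-ends type which is not
real-collinear, then there exists a system of handle generators `α₁, β₁, …, α_g, β_g` in `M`
such that `Im(conj(χ(αᵢ)) · χ(βᵢ)) > 0` for every `i` (every handle has positive volume). -/
theorem handle_system_all_handles_positive_volume (g n : ℕ) (hg : 1 ≤ g) (hn : 2 ≤ n)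
    (χ : HomologyPunctured g n →+ ℂ)
    (hends : ∃ v : Fin (n - 1) → ℤ, χ (0, v) ≠ 0)
    (hcol : ¬ RealCollinear χ) :
    ∃ α β : Fin g → HomologyPunctured g n, IsHandleSystem g n α β ∧
      ∀ i : Fin g, 0 < ((starRingEnd ℂ) (χ (α i)) * χ (β i)).im := by
  obtain ⟨v, hv⟩ := hends
  set w := χ (0, v) with hw
  let l : HomologyPunctured g n →+ ℝ :=
    { toFun := fun x => ((starRingEnd ℂ) (χ x) * w).im
      map_zero' := by simp
      map_add' := by intro x y; simp only [map_add, add_mul, Complex.add_im] }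
  have hl : l ≠ 0 := by
    intro h
    apply hcol
    refine ⟨w, fun x => ?_⟩
    have hx : ((starRingEnd ℂ) (χ x) * w).im = 0 := DFunLike.congr_fun h x
    refine ⟨((starRingEnd ℂ) (χ x) * w).re / Complex.normSq w, ?_⟩
    have hN : (Complex.normSq w : ℂ) ≠ 0 := by
      exact_mod_cast (Complex.normSq_pos.2 hv).ne'
    have h3 : (((starRingEnd ℂ) (χ x) * w).re : ℂ) = χ x * (starRingEnd ℂ) w := by
      have h4 : (((starRingEnd ℂ) (χ x) * w).re : ℂ) = (starRingEnd ℂ) (χ x) * w :=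
        Complex.ext rfl (by rw [hx]; simp)
      have h5 := congrArg (starRingEnd ℂ) h4
      rwa [Complex.conj_ofReal, map_mul, Complex.conj_conj] at h5
    rw [Complex.ofReal_div, h3, div_mul_eq_mul_div, eq_div_iff hN, Complex.normSq_eq_conj_mul_self]
    ring
  obtain ⟨α, β, hH, hne⟩ := exists_nonvanishing hg l hl
  have key : ∀ i, ∃ k : ℤ, 0 < ((starRingEnd ℂ) (χ (α i)) * χ (β i)).im + k * l (α i) := by
    intro i
    generalize ((starRingEnd ℂ) (χ (α i)) * χ (β i)).im = t
    rcases lt_or_gt_of_ne (hne i) with h | h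
    · obtain ⟨k, hk⟩ := exists_int_lt (-t / l (α i))
      refine ⟨k, ?_⟩
      rw [lt_div_iff_of_neg h] at hk
      linarith
    · obtain ⟨k, hk⟩ := exists_int_gt (-t / l (α i))
      refine ⟨k, ?_⟩
      rw [div_lt_iff₀ h] at hk
      linarith
  choose k hk using key
  refine ⟨_, _, add_periph hH (fun _ => 0) (fun i => k i • v), fun i => ?_⟩
  have e1 : α i + ((0 : Fin (2 * g) → ℤ), (0 : Fin (n - 1) → ℤ)) = α i := add_zero _
  have e2 : ((0 : Fin (2 * g) → ℤ), k i • v) = k i • ((0 : Fin (2 * g) → ℤ), v) := by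
    simp
  have e3 : χ (β i + ((0 : Fin (2 * g) → ℤ), k i • v)) = χ (β i) + ((k i : ℝ) : ℂ) * w := by
    rw [e2, map_add, map_zsmul, ← hw, zsmul_eq_mul]; simp
  simp only [e1, e3]
  have e4 : ((starRingEnd ℂ) (χ (α i)) * (χ (β i) + ((k i : ℝ) : ℂ) * w)).im
      = ((starRingEnd ℂ) (χ (α i)) * χ (β i)).im + k i * l (α i) := by
    change _ = _ + (k i : ℝ) * ((starRingEnd ℂ) (χ (α i)) * w).im
    rw [← Complex.im_ofReal_mul, ← Complex.add_im]
    congr 1; ring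
  rw [e4]
  exact hk i
end

section
/- If χ : M → ℂ is an additive homomorphism of non-trivial-ends type whose image is exactly the subgroup ℤ ⊂ ℂ of integers (χ is discrete of rank one, in normalized form), then there exists a system of handle generators α₁, β₁, …, α_g, β_g in M with χ(αᵢ) = χ(βᵢ) = 1 for every i = 1, …, g. -/
open scoped BigOperators

theorem sf_add_left (g : ℕ) (x y z : Fin (2 * g) → ℤ) :
    symplecticForm g (x + y) z = symplecticForm g x z + symplecticForm g y z := by
  unfold symplecticForm
  rw [← Finset.sum_add_distrib]
  refine Finset.sum_congr rfl fun i _ => ?_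
  simp only [Pi.add_apply]; ring

theorem sf_smul_left (g : ℕ) (c : ℤ) (x z : Fin (2 * g) → ℤ) :
    symplecticForm g (c • x) z = c * symplecticForm g x z := by
  unfold symplecticForm
  rw [Finset.mul_sum]
  refine Finset.sum_congr rfl fun i _ => ?_
  simp only [Pi.smul_apply, smul_eq_mul]; ring

theorem sf_swap (g : ℕ) (x y : Fin (2 * g) → ℤ) :
    symplecticForm g x y = - symplecticForm g y x := by
  unfold symplecticForm
  rw [← Finset.sum_neg_distrib]
  refine Finset.sum_congr rfl fun i _ => ?_
  ring

theorem sf_self (g : ℕ) (x : Fin (2 * g) → ℤ) : symplecticForm g x x = 0 := by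
  have := sf_swap g x x
  omega

theorem sf_add_right (g : ℕ) (x y z : Fin (2 * g) → ℤ) :
    symplecticForm g z (x + y) = symplecticForm g z x + symplecticForm g z y := by
  rw [sf_swap, sf_add_left, sf_swap g x, sf_swap g y]; ring

theorem sf_smul_right (g : ℕ) (c : ℤ) (x z : Fin (2 * g) → ℤ) :
    symplecticForm g z (c • x) = c * symplecticForm g z x := by
  rw [sf_swap, sf_smul_left, sf_swap g x]; ring

theorem sf_single_even (g : ℕ) (x : Fin (2 * g) → ℤ) (j : Fin g) :
    symplecticForm g x (Pi.single ⟨2 * j.1, by have := j.isLt; omega⟩ 1)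
      = - x ⟨2 * j.1 + 1, by have := j.isLt; omega⟩ := by
  unfold symplecticForm
  rw [Finset.sum_eq_single j]
  · simp [Pi.single_apply]
  · intro i _ hij
    have h : i.1 ≠ j.1 := fun h => hij (Fin.ext h)
    have h1 : 2 * i.1 + 1 ≠ 2 * j.1 := by omega
    simp [Pi.single_apply, h, h1]
  · simp

theorem sf_single_odd (g : ℕ) (x : Fin (2 * g) → ℤ) (j : Fin g) :
    symplecticForm g x (Pi.single ⟨2 * j.1 + 1, by have := j.isLt; omega⟩ 1)
      = x ⟨2 * j.1, by have := j.isLt; omega⟩ := by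
  unfold symplecticForm
  rw [Finset.sum_eq_single j]
  · simp [Pi.single_apply]
  · intro i _ hij
    have h : i.1 ≠ j.1 := fun h => hij (Fin.ext h)
    have h1 : 2 * i.1 ≠ 2 * j.1 + 1 := by omega
    simp [Pi.single_apply, h, h1]
  · simp

/-- Every functional is represented by a vector. -/
theorem sf_represent (g : ℕ) (F : (Fin (2 * g) → ℤ) →+ ℤ) :
    ∃ v, ∀ x, symplecticForm g v x = F x := by
  let v : Fin (2 * g) → ℤ := fun k =>
    if h : k.1 % 2 = 0 then F (Pi.single ⟨k.1 + 1, by have := k.isLt; omega⟩ 1)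
    else - F (Pi.single ⟨k.1 - 1, by have := k.isLt; omega⟩ 1)
  refine ⟨v, ?_⟩
  let G : (Fin (2 * g) → ℤ) →+ ℤ :=
    AddMonoidHom.mk' (symplecticForm g v) (fun x y => sf_add_right g x y v)
  have key : G = F := by
    apply AddMonoidHom.functions_ext'
    intro k
    apply AddMonoidHom.ext_int
    change symplecticForm g v (Pi.single k 1) = F (Pi.single k 1)
    rcases Nat.even_or_odd' k.1 with ⟨j, hj | hj⟩
    · have hjg : j < g := by have := k.isLt; omega
      have hk : k = ⟨2 * j, hj ▸ k.isLt⟩ := Fin.ext hj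
      rw [hk]
      rw [sf_single_even g v ⟨j, hjg⟩]
      simp [v]
    · have hjg : j < g := by have := k.isLt; omega
      have hk : k = ⟨2 * j + 1, hj ▸ k.isLt⟩ := Fin.ext hj
      rw [hk]
      rw [sf_single_odd g v ⟨j, hjg⟩]
      simp [v]
  intro x
  exact DFunLike.congr_fun key x

/-- A transvection moving `u` to `w` modulo `d`, in dual form. -/
theorem sf_transvection (g : ℕ) (d : ℤ) (u w : Fin (2 * g) → ℤ)
    (h : IsCoprime (symplecticForm g u w) d) :
    ∃ φ : (Fin (2 * g) → ℤ) → (Fin (2 * g) → ℤ),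
      (∀ x y, symplecticForm g (φ x) (φ y) = symplecticForm g x y) ∧
      ∀ y, d ∣ symplecticForm g w (φ y) - symplecticForm g u y := by
  obtain ⟨c, e, hc⟩ := h
  refine ⟨fun x => x + (c * symplecticForm g x (w + (-1 : ℤ) • u)) • (w + (-1 : ℤ) • u),
    ?_, ?_⟩
  · intro x y
    generalize w + (-1 : ℤ) • u = m
    simp only [sf_add_left, sf_add_right, sf_smul_left, sf_smul_right, sf_self]
    rw [sf_swap g m y]; ring
  · intro y
    simp only [sf_add_left, sf_add_right, sf_smul_left, sf_smul_right, sf_self]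
    rw [sf_swap g w u, sf_swap g y w, sf_swap g y u]
    refine ⟨e * (symplecticForm g w y - symplecticForm g u y), ?_⟩
    linear_combination (symplecticForm g u y - symplecticForm g w y) * hc

theorem exists_prime_pattern (d : ℕ) (P : ℕ → Prop) :
    ∃ a : ℤ, ∀ p : ℕ, p.Prime → p ∣ d → d ≠ 0 → ((p : ℤ) ∣ a ↔ P p) := by
  classical
  refine ⟨((∏ q ∈ d.primeFactors.filter P, q : ℕ) : ℤ), ?_⟩
  intro p hp hpd hd
  rw [Int.natCast_dvd_natCast, hp.prime.dvd_finsetProd_iff]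
  constructor
  · rintro ⟨q, hq, hpq⟩
    rw [Finset.mem_filter] at hq
    rw [(Nat.prime_dvd_prime_iff_eq hp (Nat.prime_of_mem_primeFactors hq.1)).1 hpq]
    exact hq.2
  · intro h
    exact ⟨p, Finset.mem_filter.2 ⟨Nat.mem_primeFactors.2 ⟨hp, hpd, hd⟩, h⟩, dvd_rfl⟩

theorem coprime_of_primes (d : ℕ) (x : ℤ)
    (h : ∀ p : ℕ, p.Prime → p ∣ d → ¬ (p : ℤ) ∣ x) : IsCoprime x (d : ℤ) := by
  rw [Int.isCoprime_iff_gcd_eq_one]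
  by_contra hne
  obtain ⟨p, hp, hpd⟩ := Nat.exists_prime_and_dvd hne
  refine h p hp ?_ ?_
  · have := (Int.natCast_dvd_natCast.2 hpd).trans (Int.gcd_dvd_right x (d : ℤ))
    exact Int.natCast_dvd_natCast.1 this
  · exact (Int.natCast_dvd_natCast.2 hpd).trans (Int.gcd_dvd_left x (d : ℤ))

theorem exists_two_coprime (d : ℕ) (hd : d ≠ 0) (e r s : ℤ) (he : (d : ℤ) ∣ e - 1) :
    ∃ a b : ℤ, IsCoprime (a * e + b * s) (d : ℤ) ∧ IsCoprime (a * r + b) (d : ℤ) := by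
  obtain ⟨a, ha⟩ := exists_prime_pattern d (fun p => (p : ℤ) ∣ r ∧ ¬ (p : ℤ) ∣ s)
  obtain ⟨b, hb⟩ := exists_prime_pattern d (fun p => ¬ (p : ℤ) ∣ r)
  have key : ∀ p : ℕ, p.Prime → p ∣ d →
      ¬ (p : ℤ) ∣ a * e + b * s ∧ ¬ (p : ℤ) ∣ a * r + b := by
    intro p hp hpd
    have ha' := ha p hp hpd hd
    have hb' := hb p hp hpd hd
    have hpp : Prime (p : ℤ) := Nat.prime_iff_prime_int.1 hp
    have hpe : ¬ (p : ℤ) ∣ e := by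
      intro h
      have h2 := dvd_sub h ((Int.natCast_dvd_natCast.2 hpd).trans he)
      rw [sub_sub_cancel] at h2
      exact hpp.not_dvd_one h2
    by_cases hr : (p : ℤ) ∣ r
    · have hb2 : ¬ (p : ℤ) ∣ b := fun h => hb'.1 h hr
      refine ⟨?_, ?_⟩
      · by_cases hs : (p : ℤ) ∣ s
        · have ha2 : ¬ (p : ℤ) ∣ a := fun h => (ha'.1 h).2 hs
          rw [dvd_add_left (hs.mul_left b), hpp.dvd_mul]
          tauto
        · have ha2 : (p : ℤ) ∣ a := ha'.2 ⟨hr, hs⟩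
          rw [dvd_add_right (ha2.mul_right e), hpp.dvd_mul]
          tauto
      · rw [dvd_add_right (hr.mul_left a)]
        exact hb2
    · have hb2 : (p : ℤ) ∣ b := hb'.2 hr
      have ha2 : ¬ (p : ℤ) ∣ a := fun h => hr (ha'.1 h).1
      rw [dvd_add_left (hb2.mul_right s), dvd_add_left hb2, hpp.dvd_mul, hpp.dvd_mul]
      tauto
  exact ⟨a, b, coprime_of_primes d _ fun p hp h => (key p hp h).1,
    coprime_of_primes d _ fun p hp h => (key p hp h).2⟩

/-- If `χ : M → ℂ` is an additive homomorphism of non-trivial-ends type whose image is exactly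
the subgroup `ℤ ⊂ ℂ` of integers (discrete of rank one, normalized form), then there exists a
system of handle generators `α₁, β₁, …, α_g, β_g` in `M` with `χ(αᵢ) = χ(βᵢ) = 1` for all `i`. -/
theorem handle_system_rank_one_normal_form (g n : ℕ) (hg : 1 ≤ g) (hn : 2 ≤ n)
    (χ : HomologyPunctured g n →+ ℂ)
    (hends : ∃ v : Fin (n - 1) → ℤ, χ (0, v) ≠ 0)
    (hrange : Set.range χ = Set.range ((↑) : ℤ → ℂ)) :
    ∃ α β : Fin g → HomologyPunctured g n, IsHandleSystem g n α β ∧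
      ∀ i : Fin g, χ (α i) = 1 ∧ χ (β i) = 1 := by
  classical
  have hint : ∀ m, ∃ k : ℤ, (k : ℂ) = χ m := by
    intro m
    have : χ m ∈ Set.range ((↑) : ℤ → ℂ) := hrange ▸ Set.mem_range_self m
    exact this
  choose c hc using hint
  have hcadd : ∀ x y, c (x + y) = c x + c y := by
    intro x y
    have : ((c (x + y) : ℤ) : ℂ) = ((c x + c y : ℤ) : ℂ) := by
      push_cast; rw [hc, hc, hc, map_add]
    exact_mod_cast this
  let C : HomologyPunctured g n →+ ℤ := AddMonoidHom.mk' c hcadd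
  let F : (Fin (2 * g) → ℤ) →+ ℤ := C.comp (AddMonoidHom.inl _ _)
  let Q : (Fin (n - 1) → ℤ) →+ ℤ := C.comp (AddMonoidHom.inr _ _)
  have hsplit : ∀ x p, c (x, p) = F x + Q p := by
    intro x p
    have h : ((x, p) : HomologyPunctured g n) = (x, 0) + (0, p) := by simp
    rw [h, hcadd]; rfl
  obtain ⟨d0, hd0⟩ := Int.subgroup_cyclic Q.range
  rw [← AddSubgroup.zmultiples_eq_closure] at hd0
  have hQd0 : ∀ k : ℤ, d0 ∣ k ↔ ∃ p, Q p = k := by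
    intro k
    rw [← Int.mem_zmultiples_iff, ← hd0, AddMonoidHom.mem_range]
  have hQ : ∀ k : ℤ, (d0.natAbs : ℤ) ∣ k ↔ ∃ p, Q p = k := by
    intro k
    rw [Int.natAbs_dvd]; exact hQd0 k
  have hd : d0.natAbs ≠ 0 := by
    intro h
    obtain ⟨p, hp⟩ := hends
    apply hp
    have h2 := (hQ (Q p)).2 ⟨p, rfl⟩
    rw [h] at h2
    have h3 : c (0, p) = 0 := by
      have h4 : Q p = 0 := by simpa using h2
      exact h4
    rw [← hc, h3]; simp
  generalize d0.natAbs = d at hQ hd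
  obtain ⟨v, hv⟩ := sf_represent g F
  let t : Fin (2 * g) → ℤ := fun k => if k.1 % 2 = 0 then 1 else -1
  let ea : Fin g → Fin (2 * g) → ℤ := fun j =>
    Pi.single ⟨2 * j.1, by have := j.isLt; omega⟩ 1
  let eb : Fin g → Fin (2 * g) → ℤ := fun j =>
    Pi.single ⟨2 * j.1 + 1, by have := j.isLt; omega⟩ 1
  have hta : ∀ j, symplecticForm g t (ea j) = 1 := by
    intro j; rw [sf_single_even]; simp [t]
  have htb : ∀ j, symplecticForm g t (eb j) = 1 := by
    intro j; rw [sf_single_odd]; simp [t]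
  obtain ⟨⟨x, p⟩, hxp⟩ : ∃ m, χ m = 1 := by
    have : (1 : ℂ) ∈ Set.range χ := by rw [hrange]; exact ⟨1, by simp⟩
    exact this
  have hx1 : F x + Q p = 1 := by
    rw [← hsplit]
    have := hc (x, p)
    rw [hxp] at this
    exact_mod_cast this
  have hxd : (d : ℤ) ∣ symplecticForm g v x - 1 := by
    rw [hv]
    have h := (hQ (Q p)).2 ⟨p, rfl⟩
    have e : F x - 1 = - Q p := by linarith
    rw [e]; exact (dvd_neg).2 h
  let y := ea ⟨0, hg⟩
  obtain ⟨a, b, h1, h2⟩ := exists_two_coprime d hd (symplecticForm g v x)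
    (symplecticForm g t x) (symplecticForm g v y) hxd
  let z := a • x + b • y
  have hz1 : IsCoprime (symplecticForm g z v) (d : ℤ) := by
    rw [sf_swap, IsCoprime.neg_left_iff, sf_add_right, sf_smul_right, sf_smul_right]
    exact h1
  have hz2 : IsCoprime (symplecticForm g t z) (d : ℤ) := by
    rw [sf_add_right, sf_smul_right, sf_smul_right, hta, mul_one]
    exact h2
  obtain ⟨T1, hT1, hT1'⟩ := sf_transvection g d z v hz1
  obtain ⟨T2, hT2, hT2'⟩ := sf_transvection g d t z hz2
  have hφ : ∀ e, symplecticForm g t e = 1 → ∃ p, χ (T1 (T2 e), p) = 1 := by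
    intro e he
    have h3 := dvd_add (hT1' (T2 e)) (hT2' e)
    rw [sub_add_sub_cancel, he, hv, ← dvd_neg, neg_sub] at h3
    obtain ⟨p, hp⟩ := (hQ _).1 h3
    refine ⟨p, ?_⟩
    rw [← hc, hsplit, hp]; simp
  choose pa hpa using fun j => hφ (ea j) (hta j)
  choose pb hpb using fun j => hφ (eb j) (htb j)
  refine ⟨fun j => (T1 (T2 (ea j)), pa j), fun j => (T1 (T2 (eb j)), pb j), ?_,
    fun i => ⟨hpa i, hpb i⟩⟩
  intro i j
  simp only [hT1, hT2]
  refine ⟨?_, ?_, ?_⟩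
  · have h : 2 * j.1 + 1 ≠ 2 * i.1 := by omega
    rw [sf_single_even]; simp [ea, Pi.single_apply, h]
  · have h : 2 * j.1 ≠ 2 * i.1 + 1 := by omega
    rw [sf_single_odd]; simp [eb, Pi.single_apply, h]
  · rw [sf_single_odd]
    simp [ea, Pi.single_apply, Fin.ext_iff, eq_comm]
end
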